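/- For every integer g ≥ 10, the number of numerical semigroups with multiplicity 4, genus g, and Frobenius number congruent to 1 modulo 4 equals ⌊(g+1)/5⌋² − (3/2)⌊(g+1)/3⌋² − (3/2)⌊(g+2)/6⌋² − ⌊(2g+4)/5⌋² + (5/4 − g/2)·⌊g/2⌋ + ⌊(g+1)/5⌋ + (g − 1/2)·⌊(g+1)/3⌋ + (⌊g/2⌋ − 1/2)·⌊(g+2)/6⌋ + (g + 1 − ⌊(g+1)/5⌋)·⌊(2g+4)/5⌋ − g²/8 − 7g/8, where the expression is evaluated in ℚ (it is an integer). -/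

import Mathlib

/-- A numerical semigroup: a subset of ℕ containing 0, closed under addition,
with finite complement. -/
def IsNumericalSemigroup (S : Set ℕ) : Prop :=
  0 ∈ S ∧ (∀ a ∈ S, ∀ b ∈ S, a + b ∈ S) ∧ Sᶜ.Finite

/-- The genus: the number of gaps of `S`. -/
noncomputable def nsGenus (S : Set ℕ) : ℕ := Sᶜ.ncard

/-- The Frobenius number: the largest gap of `S`. -/
noncomputable def nsFrobenius (S : Set ℕ) : ℕ := sSup Sᶜ

/-- The multiplicity: the least positive element of `S`. -/
noncomputable def nsMultiplicity (S : Set ℕ) : ℕ := sInf {n | n ∈ S ∧ n ≠ 0}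

/-- A minimal generator: a nonzero element of `S` that is not a sum of two
nonzero elements of `S`. -/
def IsMinimalGenerator (S : Set ℕ) (n : ℕ) : Prop :=
  n ∈ S ∧ n ≠ 0 ∧ ¬ ∃ a b, a ∈ S ∧ b ∈ S ∧ a ≠ 0 ∧ b ≠ 0 ∧ a + b = n

/-- The embedding dimension: the number of minimal generators of `S`. -/
noncomputable def nsEmbDim (S : Set ℕ) : ℕ := {n | IsMinimalGenerator S n}.ncard

/-- The number of numerical semigroups with multiplicity `m` and genus `g`. -/
noncomputable def numSgps (m g : ℕ) : ℕ :=
  {S : Set ℕ | IsNumericalSemigroup S ∧ nsMultiplicity S = m ∧ nsGenus S = g}.ncard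

/-- The number of numerical semigroups with multiplicity `m`, genus `g`, and
Frobenius number congruent to `r` modulo 4. -/
noncomputable def numSgpsFrobMod4 (m g r : ℕ) : ℕ :=
  {S : Set ℕ | IsNumericalSemigroup S ∧ nsMultiplicity S = m ∧ nsGenus S = g ∧
    nsFrobenius S % 4 = r}.ncard

/-- The set of naturals whose residue classes `0, 1, 2, 3` modulo `4` start at
`0`, `4 * x + 1`, `4 * y + 2` and `4 * z + 3`. -/
def kunzSet (x y z : ℕ) : Set ℕ :=
  {n | n % 4 = 0 ∨ (n % 4 = 1 ∧ x ≤ n / 4) ∨ (n % 4 = 2 ∧ y ≤ n / 4) ∨ (n % 4 = 3 ∧ z ≤ n / 4)}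

lemma mem_kunzSet {x y z n : ℕ} : n ∈ kunzSet x y z ↔
    n % 4 = 0 ∨ (n % 4 = 1 ∧ x ≤ n / 4) ∨ (n % 4 = 2 ∧ y ≤ n / 4) ∨ (n % 4 = 3 ∧ z ≤ n / 4) :=
  Iff.rfl

lemma compl_kunzSet (x y z : ℕ) : (kunzSet x y z)ᶜ =
    (((Finset.range x).image (fun i => 4 * i + 1) ∪ (Finset.range y).image (fun i => 4 * i + 2) ∪
      (Finset.range z).image (fun i => 4 * i + 3) : Finset ℕ) : Set ℕ) := by
  ext n
  simp only [Set.mem_compl_iff, mem_kunzSet, Finset.coe_union, Finset.coe_image, Set.mem_union,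
    Set.mem_image, Finset.coe_range, Set.mem_Iio]
  constructor
  · intro h
    have : n % 4 = 1 ∨ n % 4 = 2 ∨ n % 4 = 3 := by omega
    rcases this with h1 | h1 | h1
    · exact Or.inl (Or.inl ⟨n / 4, by omega, by omega⟩)
    · exact Or.inl (Or.inr ⟨n / 4, by omega, by omega⟩)
    · exact Or.inr ⟨n / 4, by omega, by omega⟩
  · rintro ((⟨i, hi, rfl⟩ | ⟨i, hi, rfl⟩) | ⟨i, hi, rfl⟩) <;> omega

lemma finite_compl_kunzSet (x y z : ℕ) : (kunzSet x y z)ᶜ.Finite := by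
  rw [compl_kunzSet]
  exact Finset.finite_toSet _

lemma nsGenus_kunzSet (x y z : ℕ) : nsGenus (kunzSet x y z) = x + y + z := by
  rw [nsGenus, compl_kunzSet, Set.ncard_coe_finset, Finset.card_union_of_disjoint,
    Finset.card_union_of_disjoint, Finset.card_image_of_injective, Finset.card_image_of_injective,
    Finset.card_image_of_injective]
  · simp
  · intro a b h; simpa using h
  · intro a b h; simpa using h
  · intro a b h; simpa using h
  · simp only [Finset.disjoint_left, Finset.mem_image]
    rintro a ⟨i, -, rfl⟩ ⟨j, -, h⟩
    omega
  · simp only [Finset.disjoint_left, Finset.mem_image, Finset.mem_union]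
    rintro a (⟨i, -, rfl⟩ | ⟨i, -, rfl⟩) ⟨j, -, h⟩ <;> omega

lemma nsMultiplicity_eq_four_iff {S : Set ℕ} :
    nsMultiplicity S = 4 ↔ 1 ∉ S ∧ 2 ∉ S ∧ 3 ∉ S ∧ 4 ∈ S := by
  constructor
  · intro h
    have hne : {n | n ∈ S ∧ n ≠ 0}.Nonempty := Nat.nonempty_of_sInf_eq_succ h
    have h4 := Nat.sInf_mem hne
    have hlt : ∀ n, n < 4 → n ≠ 0 → n ∉ S := fun n hn h0 hS =>
      Nat.notMem_of_lt_sInf (hn.trans_eq h.symm) ⟨hS, h0⟩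
    rw [nsMultiplicity] at h
    rw [h] at h4
    exact ⟨hlt 1 (by norm_num) (by norm_num), hlt 2 (by norm_num) (by norm_num),
      hlt 3 (by norm_num) (by norm_num), h4.1⟩
  · rintro ⟨h1, h2, h3, h4⟩
    refine IsLeast.csInf_eq ⟨⟨h4, by norm_num⟩, ?_⟩
    rintro n ⟨hn, h0⟩
    by_contra hlt
    have : n = 1 ∨ n = 2 ∨ n = 3 := by omega
    rcases this with rfl | rfl | rfl <;> contradiction

lemma nsMultiplicity_kunzSet {x y z : ℕ} :
    nsMultiplicity (kunzSet x y z) = 4 ↔ 1 ≤ x ∧ 1 ≤ y ∧ 1 ≤ z := by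
  rw [nsMultiplicity_eq_four_iff]
  norm_num [mem_kunzSet]
  omega

lemma nsFrobenius_kunzSet_mod_four {x y z : ℕ} (hx : 1 ≤ x) :
    nsFrobenius (kunzSet x y z) % 4 = 1 ↔ y < x ∧ z < x := by
  have hmem : nsFrobenius (kunzSet x y z) ∈ (kunzSet x y z)ᶜ :=
    Nat.sSup_mem ⟨1, by simp only [Set.mem_compl_iff, mem_kunzSet]; omega⟩
      (finite_compl_kunzSet x y z).bddAbove
  have hle : ∀ n ∈ (kunzSet x y z)ᶜ, n ≤ nsFrobenius (kunzSet x y z) := fun n hn =>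
    le_csSup (finite_compl_kunzSet x y z).bddAbove hn
  generalize nsFrobenius (kunzSet x y z) = F at *
  simp only [Set.mem_compl_iff, mem_kunzSet] at hmem hle
  have e1 : 4 * (x - 1) + 1 ≤ F := hle _ (by omega)
  have e2 : 1 ≤ y → 4 * (y - 1) + 2 ≤ F := fun _ => hle _ (by omega)
  have e3 : 1 ≤ z → 4 * (z - 1) + 3 ≤ F := fun _ => hle _ (by omega)
  omega

lemma isNumericalSemigroup_kunzSet {x y z : ℕ} :
    IsNumericalSemigroup (kunzSet x y z) ↔
      y ≤ 2 * x ∧ z ≤ x + y ∧ x ≤ y + z + 1 ∧ y ≤ 2 * z + 1 := by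
  constructor
  · rintro ⟨-, hadd, -⟩
    have e1 := hadd (4 * x + 1) (by rw [mem_kunzSet]; omega) (4 * x + 1) (by rw [mem_kunzSet]; omega)
    have e2 := hadd (4 * x + 1) (by rw [mem_kunzSet]; omega) (4 * y + 2) (by rw [mem_kunzSet]; omega)
    have e3 := hadd (4 * y + 2) (by rw [mem_kunzSet]; omega) (4 * z + 3) (by rw [mem_kunzSet]; omega)
    have e4 := hadd (4 * z + 3) (by rw [mem_kunzSet]; omega) (4 * z + 3) (by rw [mem_kunzSet]; omega)
    rw [mem_kunzSet] at e1 e2 e3 e4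
    omega
  · rintro ⟨h1, h2, h3, h4⟩
    refine ⟨by rw [mem_kunzSet]; omega, ?_, finite_compl_kunzSet x y z⟩
    intro a ha b hb
    rw [mem_kunzSet] at ha hb ⊢
    rcases ha with ha | ha | ha | ha <;> rcases hb with hb | hb | hb | hb <;> omega

lemma exists_forall_mul_add_mem_iff {S : Set ℕ} (hS : IsNumericalSemigroup S) {m : ℕ} (hm : m ∈ S)
    (hm0 : m ≠ 0) (r : ℕ) : ∃ x, ∀ i, m * i + r ∈ S ↔ x ≤ i := by
  obtain ⟨-, hadd, hfin⟩ := hS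
  have hex : ∃ i, m * i + r ∈ S := by
    by_contra! h
    refine Set.infinite_range_of_injective (f := fun i => m * i + r) ?_ (hfin.subset ?_)
    · intro a b hab
      simpa [hm0] using hab
    · rintro _ ⟨i, rfl⟩
      exact h i
  classical
  refine ⟨Nat.find hex, fun i => ⟨fun h => Nat.find_min' hex h, fun h => ?_⟩⟩
  induction i, h using Nat.le_induction with
  | base => exact Nat.find_spec hex
  | succ n _ ih =>
    have := hadd _ ih _ hm
    rwa [show m * n + r + m = m * (n + 1) + r by ring] at this

lemma exists_eq_kunzSet {S : Set ℕ} (hS : IsNumericalSemigroup S) (h4 : 4 ∈ S) :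
    ∃ x y z, S = kunzSet x y z := by
  obtain ⟨w, hw⟩ := exists_forall_mul_add_mem_iff hS h4 (by norm_num) 0
  obtain ⟨x, hx⟩ := exists_forall_mul_add_mem_iff hS h4 (by norm_num) 1
  obtain ⟨y, hy⟩ := exists_forall_mul_add_mem_iff hS h4 (by norm_num) 2
  obtain ⟨z, hz⟩ := exists_forall_mul_add_mem_iff hS h4 (by norm_num) 3
  have hw0 : w = 0 := Nat.le_zero.mp ((hw 0).mp hS.1)
  refine ⟨x, y, z, ?_⟩
  ext n
  rw [mem_kunzSet]
  have hn := Nat.div_add_mod n 4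
  have hlt : n % 4 = 0 ∨ n % 4 = 1 ∨ n % 4 = 2 ∨ n % 4 = 3 := by omega
  rcases hlt with h | h | h | h <;> rw [h] at hn
  · have := hw (n / 4)
    rw [hn] at this
    rw [this]; omega
  · have := hx (n / 4)
    rw [hn] at this
    rw [this]; omega
  · have := hy (n / 4)
    rw [hn] at this
    rw [this]; omega
  · have := hz (n / 4)
    rw [hn] at this
    rw [this]; omega

lemma kunzSet_injective {x y z x' y' z' : ℕ} (h : kunzSet x y z = kunzSet x' y' z') :
    x = x' ∧ y = y' ∧ z = z' := by
  have key : ∀ n, n ∈ kunzSet x y z ↔ n ∈ kunzSet x' y' z' := fun n => by rw [h]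
  simp only [mem_kunzSet] at key
  have e1 := key (4 * x + 1)
  have e2 := key (4 * x' + 1)
  have e3 := key (4 * y + 2)
  have e4 := key (4 * y' + 2)
  have e5 := key (4 * z + 3)
  have e6 := key (4 * z' + 3)
  omega

/-- The pairs `⟨x, y⟩` such that `kunzSet x y (g - x - y)` is a numerical semigroup of
multiplicity `4`, genus `g` and Frobenius number congruent to `1` modulo `4`. -/
def frobOnePairs (g : ℕ) : Finset (Σ _ : ℕ, ℕ) :=
  (Finset.Ico ((g + 4) / 3) ((g + 1) / 2 + 1)).sigma fun x =>
    Finset.Icc (max 1 (g + 1 - 2 * x)) (min (x - 1) ((2 * (g - x) + 1) / 3))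

lemma mem_frobOnePairs {g : ℕ} (hg : 10 ≤ g) {x y : ℕ} :
    (⟨x, y⟩ : Σ _ : ℕ, ℕ) ∈ frobOnePairs g ↔
      ∃ z, x + y + z = g ∧ 1 ≤ y ∧ 1 ≤ z ∧ y < x ∧ z < x ∧ x ≤ y + z + 1 ∧ y ≤ 2 * z + 1 := by
  simp only [frobOnePairs, Finset.mem_sigma, Finset.mem_Ico, Finset.mem_Icc]
  constructor
  · intro h
    exact ⟨g - x - y, by omega⟩
  · rintro ⟨z, h⟩
    omega

lemma numSgpsFrobMod4_four_one {g : ℕ} (hg : 10 ≤ g) :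
    numSgpsFrobMod4 4 g 1 = (frobOnePairs g).card := by
  rw [numSgpsFrobMod4, ← Set.ncard_coe_finset, ← Set.InjOn.ncard_image
    (f := fun p : Σ _ : ℕ, ℕ => kunzSet p.1 p.2 (g - p.1 - p.2))]
  · congr 1
    ext S
    simp only [Set.mem_ofPred_eq, Set.mem_image, SetLike.mem_coe, Sigma.exists, mem_frobOnePairs hg]
    constructor
    · rintro ⟨hS, hm, hgen, hF⟩
      obtain ⟨x, y, z, rfl⟩ := exists_eq_kunzSet hS (nsMultiplicity_eq_four_iff.mp hm).2.2.2
      rw [nsMultiplicity_kunzSet] at hm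
      rw [nsFrobenius_kunzSet_mod_four hm.1] at hF
      rw [isNumericalSemigroup_kunzSet] at hS
      rw [nsGenus_kunzSet] at hgen
      refine ⟨x, y, ⟨z, by omega⟩, ?_⟩
      rw [show g - x - y = z by omega]
    · rintro ⟨x, y, ⟨z, h⟩, rfl⟩
      rw [show g - x - y = z by omega, isNumericalSemigroup_kunzSet, nsMultiplicity_kunzSet,
        nsGenus_kunzSet, nsFrobenius_kunzSet_mod_four (by omega)]
      omega
  · rintro ⟨x, y⟩ - ⟨x', y'⟩ - h
    obtain ⟨rfl, rfl, -⟩ := kunzSet_injective h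
    rfl

lemma two_mul_sum_Ico_three_mul_sub (c : ℤ) {a b : ℕ} (hab : a ≤ b) :
    2 * ∑ x ∈ Finset.Ico a b, (3 * (x : ℤ) - c) = (b - a) * (3 * (a + b - 1) - 2 * c) := by
  induction b, hab using Nat.le_induction with
  | base => simp
  | succ n hn ih =>
    rw [Finset.sum_Ico_succ_top hn, mul_add, ih]
    push_cast
    ring

lemma sum_Ico_floor_thirds (g : ℤ) {a b : ℕ} (hab : a ≤ b) :
    ∑ x ∈ Finset.Ico a b, (2 * (g - x) + 1) / 3 =
      ((g - a + 1) * (g - a) + 1) / 3 - ((g - b + 1) * (g - b) + 1) / 3 := by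
  induction b, hab using Nat.le_induction with
  | base => simp
  | succ n hn ih =>
    rw [Finset.sum_Ico_succ_top hn, ih]
    push_cast
    obtain ⟨k, r, hr, hr3, hk⟩ : ∃ k r : ℤ, 0 ≤ r ∧ r < 3 ∧ g - n = 3 * k + r :=
      ⟨(g - n) / 3, (g - n) % 3, by omega, by omega, by omega⟩
    rw [show g - (n + 1 : ℤ) = 3 * k + r - 1 by omega, hk]
    interval_cases r <;> ring_nf <;> omega

lemma sum_Ico_two_mul_sub (g : ℤ) {a b : ℕ} (hab : a ≤ b) :
    ∑ x ∈ Finset.Ico a b, (2 * (x : ℤ) - g) = (b - a) * (a + b - 1 - g) := by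
  induction b, hab using Nat.le_induction with
  | base => simp
  | succ n hn ih =>
    rw [Finset.sum_Ico_succ_top hn, ih]
    push_cast
    ring

lemma two_mul_card_frobOnePairs {g : ℕ} (hg : 10 ≤ g) {a b c : ℕ} (ha : a = (g + 4) / 3)
    (hb : b = (2 * g + 4) / 5 + 1) (hc : c = (g + 1) / 2 + 1) :
    2 * ((frobOnePairs g).card : ℤ) =
      (b - a) * (3 * (a + b - 1) - 2 * (g + 1)) +
      2 * ((((g - b + 1) * (g - b) + 1) / 3 - ((g - c + 1) * (g - c) + 1) / 3) +
        (c - b) * (b + c - 1 - g) - (g % 2 : ℕ)) := by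
  have hab : a ≤ b := by omega
  have hbc : b ≤ c := by omega
  have hbc' : b ≤ c - 1 := by omega
  rw [frobOnePairs, Finset.card_sigma, ← ha, ← hc, ← Finset.sum_Ico_consecutive _ hab hbc]
  push_cast
  rw [mul_add, ← two_mul_sum_Ico_three_mul_sub _ hab, ← sum_Ico_floor_thirds _ hbc,
    ← sum_Ico_two_mul_sub _ hbc, ← Finset.sum_add_distrib]
  congr 2
  · refine Finset.sum_congr rfl fun x hx => ?_
    rw [Finset.mem_Ico] at hx
    rw [Nat.card_Icc]
    omega
  · obtain ⟨d, rfl⟩ : ∃ d, c = d + 1 := ⟨(g + 1) / 2, hc⟩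
    rw [Finset.sum_Ico_succ_top (by omega), Finset.sum_Ico_succ_top (by omega), add_sub_assoc]
    congr 1
    · refine Finset.sum_congr rfl fun x hx => ?_
      rw [Finset.mem_Ico] at hx
      rw [Nat.card_Icc]
      omega
    · rw [Nat.card_Icc]
      omega

set_option maxHeartbeats 4000000 in
/-- count of numerical semigroups with multiplicity 4, genus `g ≥ 10`, Frobenius number ≡ 1 (mod 4). -/
theorem statement13 (g : ℕ) (hg : 10 ≤ g) :
    (numSgpsFrobMod4 4 g 1 : ℚ) =
      ((⌊((g : ℚ)+1)/5⌋ : ℚ))^2 - (3/2) * ((⌊((g : ℚ)+1)/3⌋ : ℚ))^2 - (3/2) * ((⌊((g : ℚ)+2)/6⌋ : ℚ))^2 - ((⌊(2*(g : ℚ)+4)/5⌋ : ℚ))^2 + (5/4 - (g : ℚ)/2) * ((⌊(g : ℚ)/2⌋ : ℚ)) + ((⌊((g : ℚ)+1)/5⌋ : ℚ)) + ((g : ℚ) - 1/2) * ((⌊((g : ℚ)+1)/3⌋ : ℚ)) + (((⌊(g : ℚ)/2⌋ : ℚ)) - 1/2) * ((⌊((g : ℚ)+2)/6⌋ : ℚ))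 + ((g : ℚ) + 1 - ((⌊((g : ℚ)+1)/5⌋ : ℚ))) * ((⌊(2*(g : ℚ)+4)/5⌋ : ℚ)) - (g : ℚ)^2/8 - 7*(g : ℚ)/8 := by
  have floor_div (n d : ℕ) : ⌊(n : ℚ) / (d : ℚ)⌋ = ((n / d : ℕ) : ℤ) := by
    rw [← Int.natCast_floor_eq_floor (by positivity), Nat.floor_div_eq_div]
  have h1 := floor_div (g + 1) 5
  have h2 := floor_div (g + 1) 3
  have h3 := floor_div (g + 2) 6
  have h4 := floor_div (2 * g + 4) 5
  have h5 := floor_div g 2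
  simp only [Nat.cast_add, Nat.cast_mul, Nat.cast_one, Nat.cast_ofNat] at h1 h2 h3 h4 h5
  rw [h1, h2, h3, h4, h5, numSgpsFrobMod4_four_one hg]
  have hcard := two_mul_card_frobOnePairs hg rfl rfl rfl
  generalize (frobOnePairs g).card = N at *
  clear h1 h2 h3 h4 h5 floor_div
  obtain ⟨q, r, hr, rfl⟩ : ∃ q r, r < 30 ∧ g = 30 * q + r :=
    ⟨g / 30, g % 30, by omega, by omega⟩
  have hP : ∀ n k : ℤ, ((3 * n * q + k + 1) * (3 * n * q + k) + 1) / 3 =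
      3 * n ^ 2 * q ^ 2 + 2 * n * q * k + n * q + ((k + 1) * k + 1) / 3 := by
    intro n k
    rw [show (3 * n * q + k + 1) * (3 * n * q + k) + 1 = ((k + 1) * k + 1) +
      3 * (3 * n ^ 2 * q ^ 2 + 2 * n * q * k + n * q) by ring]
    omega
  have hPb := hP 6 (r - ((2 * r + 4) / 5 + 1 : ℕ))
  have hPc := hP 5 (r - ((r + 1) / 2 + 1 : ℕ))
  rw [show (30 * q + r + 4) / 3 = 10 * q + (r + 4) / 3 by omega,
    show (2 * (30 * q + r) + 4) / 5 = 12 * q + (2 * r + 4) / 5 by omega,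
    show (30 * q + r + 1) / 2 = 15 * q + (r + 1) / 2 by omega,
    show (30 * q + r) % 2 = r % 2 by omega] at hcard
  rw [show (30 * q + r + 1) / 5 = 6 * q + (r + 1) / 5 by omega,
    show (30 * q + r + 1) / 3 = 10 * q + (r + 1) / 3 by omega,
    show (30 * q + r + 2) / 6 = 5 * q + (r + 2) / 6 by omega,
    show (2 * (30 * q + r) + 4) / 5 = 12 * q + (2 * r + 4) / 5 by omega,
    show (30 * q + r) / 2 = 15 * q + r / 2 by omega]
  rw [show ((30 * q + r : ℕ) : ℤ) - ((12 * q + (2 * r + 4) / 5 + 1 : ℕ) : ℤ) =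
      3 * 6 * q + (r - ((2 * r + 4) / 5 + 1 : ℕ)) by push_cast; ring,
    show ((30 * q + r : ℕ) : ℤ) - ((15 * q + (r + 1) / 2 + 1 : ℕ) : ℤ) =
      3 * 5 * q + (r - ((r + 1) / 2 + 1 : ℕ)) by push_cast; ring, hPb, hPc] at hcard
  clear hP hPb hPc hg
  have hcardQ := congrArg (Int.cast (R := ℚ)) hcard
  clear hcard
  interval_cases r <;> norm_num at hcardQ ⊢ <;> linarith
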